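/- Spectral curve and commuting integrals in cartesian coordinates. Let L(λ) = [[p_x + (2λ − x)p_y, λ² − λx + (x² − 2y)/4], [−4p_y², −(p_x + (2λ − x)p_y)]]. Then for every λ ∈ ℝ, −det L(λ) = H·λ + J, where H = 4·p_x·p_y and J = p_x² − 2x·p_x·p_y + 2y·p_y²; moreover {H, J} = 0. -/

import Mathlib

/-- The canonical Poisson bracket of two functions of `(x, y, pₓ, p_y)` on `ℝ⁴`:
`{F,G} = ∂F/∂pₓ·∂G/∂x − ∂F/∂x·∂G/∂pₓ + ∂F/∂p_y·∂G/∂y − ∂F/∂y·∂G/∂p_y`. -/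
noncomputable def pb (F G : ℝ → ℝ → ℝ → ℝ → ℝ) (x y px py : ℝ) : ℝ :=
    deriv (fun s => F x y s py) px * deriv (fun s => G s y px py) x
  - deriv (fun s => F s y px py) x * deriv (fun s => G x y s py) px
  + deriv (fun s => F x y px s) py * deriv (fun s => G x s px py) y
  - deriv (fun s => F x s px py) y * deriv (fun s => G x y px s) py

/-- The Lax matrix of the free Stäckel system separable in cartesian
coordinates, with spectral parameter `lam`. -/
noncomputable def L (lam x y px py : ℝ) : Matrix (Fin 2) (Fin 2) ℝ :=
  !![px + (2 * lam - x) * py, lam ^ 2 - lam * x + (x ^ 2 - 2 * y) / 4;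
     -(4 * py ^ 2), -(px + (2 * lam - x) * py)]

/-- The Hamiltonian `H = 4pₓp_y`. -/
noncomputable def Ham : ℝ → ℝ → ℝ → ℝ → ℝ := fun _ _ px py => 4 * px * py

/-- The second integral of motion `J = pₓ² − 2x pₓ p_y + 2y p_y²`. -/
noncomputable def J : ℝ → ℝ → ℝ → ℝ → ℝ :=
  fun x y px py => px ^ 2 - 2 * x * px * py + 2 * y * py ^ 2

theorem neg_det_fin_two_traceless {R : Type*} [CommRing R] (a b c : R) :
    -!![a, b; c, -a].det = a ^ 2 + b * c := by
  rw [Matrix.det_fin_two_of]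
  ring

theorem neg_det_L (lam x y px py : ℝ) :
    -(L lam x y px py).det = Ham x y px py * lam + J x y px py :=
  calc -(L lam x y px py).det
      = (px + (2 * lam - x) * py) ^ 2
          + (lam ^ 2 - lam * x + (x ^ 2 - 2 * y) / 4) * -(4 * py ^ 2) :=
        neg_det_fin_two_traceless _ _ _
    _ = 4 * px * py * lam + (px ^ 2 - 2 * x * px * py + 2 * y * py ^ 2) := by ring

theorem pb_left_of_momenta (f : ℝ → ℝ → ℝ) (G : ℝ → ℝ → ℝ → ℝ → ℝ) (x y px py : ℝ) :
    pb (fun _ _ => f) G x y px py =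
      deriv (fun s => f s py) px * deriv (fun s => G s y px py) x
        + deriv (f px) py * deriv (fun s => G x s px py) y := by
  simp only [pb, deriv_const, zero_mul, sub_zero]

theorem pb_Ham_left (G : ℝ → ℝ → ℝ → ℝ → ℝ) (x y px py : ℝ) :
    pb Ham G x y px py =
      4 * py * deriv (fun s => G s y px py) x + 4 * px * deriv (fun s => G x s px py) y :=
  calc pb Ham G x y px py
      = deriv (fun s => 4 * s * py) px * deriv (fun s => G s y px py) x
          + deriv (fun s => 4 * px * s) py * deriv (fun s => G x s px py) y :=
        pb_left_of_momenta (fun px py => 4 * px * py) G x y px py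
    _ = 4 * py * deriv (fun s => G s y px py) x + 4 * px * deriv (fun s => G x s px py) y := by
        simp

theorem deriv_J_x (x y px py : ℝ) :
    deriv (fun s => J s y px py) x = -(2 * px * py) := by
  simp [J]

theorem deriv_J_y (x y px py : ℝ) :
    deriv (fun s => J x s px py) y = 2 * py ^ 2 := by
  simp [J]

/- The flow of `4pₓp_y` fixes the momenta and moves `(x, y)` in the direction `(p_y, pₓ)`, along
which `J` is constant. -/
theorem pb_Ham_J (x y px py : ℝ) : pb Ham J x y px py = 0 :=
  calc pb Ham J x y px py = 4 * py * -(2 * px * py) + 4 * px * (2 * py ^ 2) := by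
        rw [pb_Ham_left, deriv_J_x, deriv_J_y]
    _ = 0 := by ring

/-- Spectral curve and commuting integrals in cartesian coordinates:
`−det L(λ) = Hλ + J` and `{H, J} = 0`. -/
theorem spectral_curve_cartesian :
    (∀ lam x y px py : ℝ,
      -(L lam x y px py).det = Ham x y px py * lam + J x y px py) ∧
    (∀ x y px py : ℝ, pb Ham J x y px py = 0) :=
  ⟨neg_det_L, pb_Ham_J⟩
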